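/- arXiv:1902.03178 — 2 statements merged into one kernel-verified Lean document; each statement's English description precedes it below -/
import Mathlib

section
/- Let (G,I,O) be an open graph that admits a focused gFlow, and let u be a vertex with u ∉ I ∪ O. Then the open graph (G', I, O), where G' := (G⋆u) ∖ {u} is obtained from the local complementation of G at u by deleting the vertex u, also admits a focused gFlow. -/
open Finset symmDiff

variable {V : Type*}

/-- The neighbourhood of a vertex as a `Finset`. -/
def nbhd [Fintype V] [DecidableEq V] (G : SimpleGraph V) [DecidableRel G.Adj] (v : V) :
    Finset V :=
  Finset.univ.filter (G.Adj v)

/-- The odd neighbourhood of a set of vertices: all vertices with an odd number of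
neighbours in `A`. -/
def oddNbhd [Fintype V] [DecidableEq V] (G : SimpleGraph V) [DecidableRel G.Adj]
    (A : Finset V) : Finset V :=
  Finset.univ.filter fun w => Odd (A.filter (G.Adj w)).card

/-- Local complementation of `G` at the vertex `u`. -/
def localComp (G : SimpleGraph V) (u : V) : SimpleGraph V where
  Adj v w := v ≠ w ∧ Xor' (G.Adj v w) (G.Adj u v ∧ G.Adj u w)
  symm := by
    refine ⟨?_⟩
    rintro v w ⟨h1, h2⟩
    exact ⟨h1.symm, by rwa [G.adj_comm v w, and_comm] at h2⟩
  loopless := by refine ⟨?_⟩; rintro v ⟨h, -⟩; exact h rfl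

instance {a b : Prop} [Decidable a] [Decidable b] : Decidable (Xor' a b) :=
  inferInstanceAs (Decidable ((a ∧ ¬b) ∨ (b ∧ ¬a)))

instance [DecidableEq V] (G : SimpleGraph V) [DecidableRel G.Adj] (u : V) :
    DecidableRel (localComp G u).Adj :=
  fun v w => inferInstanceAs (Decidable (v ≠ w ∧ Xor' (G.Adj v w) (G.Adj u v ∧ G.Adj u w)))

/-- The pivot of `G` along the edge `uv`. -/
def pivot (G : SimpleGraph V) (u v : V) : SimpleGraph V :=
  localComp (localComp (localComp G u) v) u

instance {α β : Type*} (G : SimpleGraph β) [DecidableRel G.Adj] (f : α → β) :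
    DecidableRel (G.comap f).Adj :=
  fun a b => inferInstanceAs (Decidable (G.Adj (f a) (f b)))

/-- `(g, r)` is a focused gFlow on the open graph `(G, I, O)`: `r` is a strict partial
order, each correction set `g u` (for `u ∉ O`) avoids the inputs, its odd neighbourhood
meets the non-outputs exactly in `{u}`, and `g u` lies strictly in the future of `u`. -/
def IsFocusedGFlow [Fintype V] [DecidableEq V] (G : SimpleGraph V) [DecidableRel G.Adj]
    (I O : Finset V) (g : V → Finset V) (r : V → V → Prop) : Prop :=
  (∀ a, ¬ r a a) ∧ (∀ a b c, r a b → r b c → r a c) ∧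
    ∀ u ∉ O, g u ∩ I = ∅ ∧ oddNbhd G (g u) \ O = {u} ∧ ∀ v ∈ g u, r u v

/-- The open graph `(G, I, O)` admits a focused gFlow. -/
def HasFocusedGFlow [Fintype V] [DecidableEq V] (G : SimpleGraph V) [DecidableRel G.Adj]
    (I O : Finset V) : Prop :=
  ∃ g r, IsFocusedGFlow G I O g r

open Classical in
/-- Adjacency as an element of `ZMod 2`. -/
noncomputable def adjZ (G : SimpleGraph V) (v t : V) : ZMod 2 := if G.Adj v t then 1 else 0

/-- Indicator of a finset with values in `ZMod 2`. -/
def ind [DecidableEq V] (A : Finset V) (t : V) : ZMod 2 := if t ∈ A then 1 else 0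

theorem mem_oddNbhd_iff [Fintype V] [DecidableEq V] (G : SimpleGraph V) [DecidableRel G.Adj]
    (A : Finset V) (v : V) :
    v ∈ oddNbhd G A ↔ ∑ t, adjZ G v t * ind A t = 1 := by
  have : ∑ t, adjZ G v t * ind A t = (((A.filter (G.Adj v)).card : ℕ) : ZMod 2) := by
    rw [Finset.card_filter, Nat.cast_sum, ← Finset.sum_subset (Finset.subset_univ A)]
    · refine Finset.sum_congr rfl fun t ht => ?_
      by_cases h : G.Adj v t <;> simp [adjZ, ind, h, ht]
    · intro t _ ht
      simp [ind, ht]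
  rw [this, ZMod.natCast_eq_one_iff_odd]
  simp [oddNbhd]

theorem sum_subtype_ne [Fintype V] [DecidableEq V] (u : V) (f : V → ZMod 2)
    (hf : f u = 0) : ∑ t : {x : V // x ≠ u}, f t.1 = ∑ t, f t := by
  rw [← Finset.sum_subtype (Finset.univ.filter fun x => x ≠ u) (by simp) f, Finset.sum_filter]
  refine Finset.sum_congr rfl fun t _ => ?_
  by_cases h : t = u <;> simp [h, hf]

theorem exists_step [Fintype V] [DecidableEq V] (G : SimpleGraph V) [DecidableRel G.Adj]
    (I O : Finset V) (g : V → Finset V) (r : V → V → Prop)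
    (htr : ∀ a b c, r a b → r b c → r a c) (hirr : ∀ a, ¬ r a a)
    (hg : ∀ u ∉ O, g u ∩ I = ∅ ∧ oddNbhd G (g u) \ O = {u} ∧ ∀ v ∈ g u, r u v)
    (u : V) (huI : u ∉ I) (huO : u ∉ O) (w : V) (hwO : w ∉ O) (hwu : w ≠ u) :
    ∃ b : V → ZMod 2, (∀ t ∈ I, b t = 0) ∧ b u = 0 ∧
      (∀ v ∉ O, v ≠ u → ∑ t, adjZ (localComp G u) v t * b t =
        (if v = w then 1 else 0) + adjZ G u v * b v) ∧
      ∀ t, b t ≠ 0 → r w t := by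
  have hI : ∀ a ∉ O, ∀ t ∈ I, ind (g a) t = 0 := by
    intro a ha t ht
    have : t ∉ g a := fun h => by
      have : t ∈ g a ∩ I := Finset.mem_inter.2 ⟨h, ht⟩
      simp [(hg a ha).1] at this
    simp [ind, this]
  have hs : ∀ a ∉ O, ∀ v ∉ O, ∑ t, adjZ G v t * ind (g a) t = if v = a then 1 else 0 := by
    intro a ha v hv
    have h1 : v ∈ oddNbhd G (g a) \ O ↔ v = a := by rw [(hg a ha).2.1]; simp
    rw [Finset.mem_sdiff, mem_oddNbhd_iff] at h1
    generalize ∑ t, adjZ G v t * ind (g a) t = z at h1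
    have : ∀ z : ZMod 2, z ≠ 1 → z = 0 := by decide
    split_ifs with h
    · exact (h1.2 h).1
    · exact this z fun hz => h (h1.1 ⟨hz, hv⟩)
  have hr : ∀ a ∉ O, ∀ t, ind (g a) t ≠ 0 → r a t := by
    intro a ha t ht
    refine (hg a ha).2.2 t ?_
    by_contra h
    simp [ind, h] at ht
  have huu : ind (g u) u = 0 := by
    by_contra h
    exact hirr u (hr u huO u h)
  let d : V → ZMod 2 := fun t => if t = u then 1 else 0
  let b : V → ZMod 2 := fun t => ind (g w) t + ind (g w) u * (ind (g u) t + d t)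
  have hbu : b u = 0 := by simp [b, d, huu, CharTwo.add_self_eq_zero]
  have hsum : ∀ v ∉ O, ∑ t, adjZ G v t * b t =
      (if v = w then 1 else 0) + ind (g w) u * ((if v = u then 1 else 0) + adjZ G v u) := by
    intro v hv
    rw [← hs w hwO v hv, ← hs u huO v hv]
    have : adjZ G v u = ∑ t, adjZ G v t * d t := by simp [d]
    rw [this, ← Finset.sum_add_distrib, Finset.mul_sum, ← Finset.sum_add_distrib]
    refine Finset.sum_congr rfl fun t _ => ?_
    simp only [b]
    ring
  have hadj : ∀ v t, adjZ (localComp G u) v t =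
      adjZ G v t + adjZ G u v * adjZ G u t + (if v = t then adjZ G u v else 0) := by
    intro v t
    by_cases hvt : v = t
    · subst hvt
      by_cases h : G.Adj u v <;> simp [adjZ, localComp, h, CharTwo.add_self_eq_zero]
    · by_cases h : G.Adj u v <;> by_cases h' : G.Adj u t <;> by_cases h'' : G.Adj v t <;>
        simp [adjZ, localComp, h, h', h'', hvt, Xor', CharTwo.add_self_eq_zero]
  refine ⟨b, ?_, hbu, ?_, ?_⟩
  · intro t ht
    have : t ≠ u := fun h => huI (h ▸ ht)
    simp [b, d, hI w hwO t ht, hI u huO t ht, this]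
  · intro v hv hvu
    have hsymm : adjZ G v u = adjZ G u v := by simp [adjZ, G.adj_comm]
    have e1 : ∑ t, adjZ (localComp G u) v t * b t =
        ∑ t, adjZ G v t * b t + adjZ G u v * ∑ t, adjZ G u t * b t + adjZ G u v * b v := by
      have : adjZ G u v * b v = ∑ t, (if v = t then adjZ G u v else 0) * b t := by
        simp [ite_mul]
      rw [this, Finset.mul_sum, ← Finset.sum_add_distrib, ← Finset.sum_add_distrib]
      refine Finset.sum_congr rfl fun t _ => ?_
      rw [hadj]
      ring
    have huadj : adjZ G u u = 0 := by simp [adjZ]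
    rw [e1, hsum v hv, hsum u huO, huadj, hsymm]
    simp only [hvu, hwu.symm, if_false, if_true]
    have h2 := CharTwo.add_self_eq_zero (ind (g w) u * adjZ G u v)
    linear_combination h2
  · intro t ht
    by_cases h1 : ind (g w) t = 0
    · have h2 : ind (g w) u ≠ 0 := fun h => ht (by simp [b, h1, h])
      have h3 := hr w hwO u h2
      by_cases htu : t = u
      · exact htu ▸ h3
      · have h4 : ind (g u) t ≠ 0 := fun h => ht (by simp [b, d, h1, h, htu])
        exact htr _ _ _ h3 (hr u huO t h4)
    · exact hr w hwO t h1

theorem hasFocusedGFlow_localComp_delete [Fintype V] [DecidableEq V]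
    (G : SimpleGraph V) [DecidableRel G.Adj] (I O : Finset V)
    (h : HasFocusedGFlow G I O) (u : V) (hu : u ∉ I ∪ O) :
    HasFocusedGFlow ((localComp G u).comap (Subtype.val : {x : V // x ≠ u} → V))
      (I.subtype (· ≠ u)) (O.subtype (· ≠ u)) := by
  classical
  obtain ⟨g, r, hirr, htr, hg⟩ := h
  have huI : u ∉ I := fun h => hu (Finset.mem_union_left _ h)
  have huO : u ∉ O := fun h => hu (Finset.mem_union_right _ h)
  have hex : ∀ w, ∃ x : V → ZMod 2, w ∉ O → w ≠ u →
      ((∀ t ∈ I, x t = 0) ∧ x u = 0 ∧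
      (∀ v ∉ O, v ≠ u → ∑ t, adjZ (localComp G u) v t * x t = if v = w then 1 else 0) ∧
      ∀ t, x t ≠ 0 → r w t) := by
    have wf : WellFounded (fun a b => r b a) := by
      have : IsTrans V (fun a b => r b a) := ⟨fun a b c h1 h2 => htr c b a h2 h1⟩
      have : Std.Irrefl (fun a b => r b a) := ⟨fun a => hirr a⟩
      exact Finite.wellFounded_of_trans_of_irrefl _
    intro w
    induction w using wf.induction with
    | _ w ih =>
    by_cases hw : w ∉ O ∧ w ≠ u
    swap
    · exact ⟨0, fun h1 h2 => absurd ⟨h1, h2⟩ hw⟩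
    obtain ⟨hwO, hwu⟩ := hw
    have ih' : ∀ v, ∃ x : V → ZMod 2, r w v → v ∉ O → v ≠ u →
      ((∀ t ∈ I, x t = 0) ∧ x u = 0 ∧
      (∀ v' ∉ O, v' ≠ u →
        ∑ t, adjZ (localComp G u) v' t * x t = if v' = v then 1 else 0) ∧
      ∀ t, x t ≠ 0 → r v t) := by
      intro v
      by_cases hv : r w v
      · obtain ⟨x, hx⟩ := ih v hv
        exact ⟨x, fun _ => hx⟩
      · exact ⟨0, fun h => absurd h hv⟩
    choose y hy using ih'
    obtain ⟨b, hbI, hbu, hbs, hbr⟩ := exists_step G I O g r htr hirr hg u huI huO w hwO hwu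
    let c : V → ZMod 2 := fun v => if v ∈ O then 0 else b v * adjZ G u v
    have hc : ∀ v, c v ≠ 0 → r w v ∧ v ∉ O ∧ v ≠ u := by
      intro v hv
      have h1 : v ∉ O := by intro h; simp [c, h] at hv
      have h2 : b v ≠ 0 := by intro h; simp [c, h] at hv
      exact ⟨hbr v h2, h1, fun h => h2 (h ▸ hbu)⟩
    have hcy : ∀ v t, c v * y v t ≠ 0 → c v ≠ 0 ∧ y v t ≠ 0 := by
      intro v t h
      exact ⟨left_ne_zero_of_mul h, right_ne_zero_of_mul h⟩
    refine ⟨fun t => b t + ∑ v, c v * y v t, fun _ _ => ⟨?_, ?_, ?_, ?_⟩⟩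
    · intro t ht
      have : ∑ v, c v * y v t = 0 := by
        apply Finset.sum_eq_zero
        intro v _
        by_contra h
        obtain ⟨h1, h2⟩ := hcy v t h
        obtain ⟨h3, h4, h5⟩ := hc v h1
        exact h2 ((hy v h3 h4 h5).1 t ht)
      simp [this, hbI t ht]
    · have : ∑ v, c v * y v u = 0 := by
        apply Finset.sum_eq_zero
        intro v _
        by_contra h
        obtain ⟨h1, h2⟩ := hcy v u h
        obtain ⟨h3, h4, h5⟩ := hc v h1
        exact h2 ((hy v h3 h4 h5).2.1)
      simp [this, hbu]
    · intro v hvO hvu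
      have key : ∑ t, adjZ (localComp G u) v t * ∑ v', c v' * y v' t = c v := by
        calc _ = ∑ v', c v' * ∑ t, adjZ (localComp G u) v t * y v' t := by
              simp only [Finset.mul_sum]
              rw [Finset.sum_comm]
              refine Finset.sum_congr rfl fun _ _ => Finset.sum_congr rfl fun _ _ => by ring
          _ = ∑ v', c v' * (if v = v' then 1 else 0) := by
              refine Finset.sum_congr rfl fun v' _ => ?_
              by_cases h : c v' = 0
              · simp [h]
              · obtain ⟨h3, h4, h5⟩ := hc v' h
                rw [(hy v' h3 h4 h5).2.2.1 v hvO hvu]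
          _ = c v := by simp
      simp only [mul_add, Finset.sum_add_distrib]
      rw [key, hbs v hvO hvu]
      simp only [c, hvO, if_false]
      rw [add_assoc, mul_comm (b v), CharTwo.add_self_eq_zero, add_zero]
    · intro t ht
      by_cases hb : b t = 0
      · have : ∑ v, c v * y v t ≠ 0 := by simpa [hb] using ht
        obtain ⟨v, _, h⟩ := Finset.exists_ne_zero_of_sum_ne_zero this
        obtain ⟨h1, h2⟩ := hcy v t h
        obtain ⟨h3, h4, h5⟩ := hc v h1
        exact htr _ _ _ h3 ((hy v h3 h4 h5).2.2.2 t h2)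
      · exact hbr t hb
  choose x hx using hex
  refine ⟨fun w => Finset.univ.filter fun t => x w.1 t.1 ≠ 0, fun a b => r a.1 b.1,
    fun a => hirr _, fun a b c => htr _ _ _, ?_⟩
  rintro ⟨w, hwu⟩ hwO
  have hwO' : w ∉ O := by simpa using hwO
  obtain ⟨h1, h2, h3, h4⟩ := hx w hwO' hwu
  refine ⟨?_, ?_, ?_⟩
  · ext ⟨t, ht⟩
    have := h1 t
    simp only [Finset.mem_inter, Finset.mem_filter, Finset.mem_univ, true_and,
      Finset.mem_subtype, Finset.notMem_empty, iff_false]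
    tauto
  · ext ⟨v, hv⟩
    simp only [Finset.mem_sdiff, mem_oddNbhd_iff, Finset.mem_subtype, Finset.mem_singleton,
      Subtype.mk.injEq]
    have e : ∑ t : {x : V // x ≠ u}, adjZ ((localComp G u).comap Subtype.val) ⟨v, hv⟩ t *
        ind (Finset.univ.filter fun t : {x : V // x ≠ u} => x w t.1 ≠ 0) t
        = ∑ t, adjZ (localComp G u) v t * x w t := by
      rw [← sum_subtype_ne u _ (by simp [h2])]
      refine Finset.sum_congr rfl fun t _ => ?_
      have : ind (Finset.univ.filter fun t : {x : V // x ≠ u} => x w t.1 ≠ 0) t = x w t.1 := by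
        simp only [ind, Finset.mem_filter, Finset.mem_univ, true_and]
        generalize x w t.1 = z
        revert z; decide
      rw [this]
      congr 1
    rw [e]
    constructor
    · rintro ⟨ha, hb⟩
      rw [h3 v hb hv] at ha
      by_contra hne
      simp [hne] at ha
    · rintro rfl
      exact ⟨by rw [h3 v hwO' hv]; simp, hwO'⟩
  · rintro ⟨t, ht⟩ h
    exact h4 t (by simpa using h)
end

section
/- Let G be a simple graph on a finite vertex set V and let u, v be adjacent vertices of G. Then for every vertex w ∈ V: N_{G∧uv}(w) = N_G(w) Δ N_G[u] Δ N_G[v] if w ∈ N_G[u] ∩ N_G[v]; N_{G∧uv}(w) = N_G(w) Δ N_G[v] if w ∈ N_G[u] ∖ N_G[v]; N_{G∧uv}(w) = N_G(w) Δ N_G[u] if w ∈ N_G[v] ∖ N_G[u]; and N_{G∧uv}(w) = N_G(w) otherwise. -/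
open Finset symmDiff

variable {V : Type*}

instance [DecidableEq V] (G : SimpleGraph V) [DecidableRel G.Adj] (u v : V) :
    DecidableRel (pivot G u v).Adj :=
  inferInstanceAs (DecidableRel (localComp (localComp (localComp G u) v) u).Adj)

/-- The closed neighbourhood of a vertex. -/
def clNbhd [Fintype V] [DecidableEq V] (G : SimpleGraph V) [DecidableRel G.Adj] (v : V) :
    Finset V :=
  insert v (nbhd G v)

theorem mem_nbhd_iff' [Fintype V] [DecidableEq V] (G : SimpleGraph V) [DecidableRel G.Adj]
    (a x : V) : x ∈ nbhd G a ↔ G.Adj a x := by simp [nbhd]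

theorem mem_clNbhd_iff' [Fintype V] [DecidableEq V] (G : SimpleGraph V) [DecidableRel G.Adj]
    (a x : V) : x ∈ clNbhd G a ↔ x = a ∨ G.Adj a x := by simp [clNbhd, nbhd]

theorem localComp_adj' (G : SimpleGraph V) (u a b : V) :
    (localComp G u).Adj a b ↔ a ≠ b ∧ Xor' (G.Adj a b) (G.Adj u a ∧ G.Adj u b) := Iff.rfl

set_option maxHeartbeats 2000000 in
theorem pivot_adj' (G : SimpleGraph V) (u v : V) (huv : G.Adj u v) (w x : V) :
    (pivot G u v).Adj w x ↔ Xor' (G.Adj w x)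
      (Xor' ((w = u ∨ G.Adj u w) ∧ (x = v ∨ G.Adj v x))
        ((w = v ∨ G.Adj v w) ∧ (x = u ∨ G.Adj u x))) := by
  have hne : u ≠ v := huv.ne
  have hne' : v ≠ u := huv.ne'
  have hvu := huv.symm
  have e1 := G.adj_comm w u
  have e2 := G.adj_comm w v
  simp only [pivot, localComp_adj', Xor', Xor]
  by_cases hwx : w = x
  · subst hwx
    simp
    tauto
  by_cases hwu : w = u
  · subst hwu
    by_cases hxv : x = v
    · subst hxv
      simp_all
    · have := Ne.symm hxv
      simp_all
      tauto
  by_cases hwv : w = v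
  · subst hwv
    by_cases hxu : x = u
    · subst hxu
      simp_all
    · have := Ne.symm hxu
      simp_all
      tauto
  have := Ne.symm hwu
  have := Ne.symm hwv
  by_cases hxu : x = u
  · subst hxu
    simp_all
    tauto
  by_cases hxv : x = v
  · subst hxv
    by_cases G.Adj u w <;> by_cases G.Adj x w <;> simp_all
  have := Ne.symm hxu
  have := Ne.symm hxv
  by_cases G.Adj w x <;>
    by_cases G.Adj u w <;> by_cases G.Adj v w <;> by_cases G.Adj u x <;> by_cases G.Adj v x <;>
    simp_all

theorem nbhd_pivot [Fintype V] [DecidableEq V] (G : SimpleGraph V) [DecidableRel G.Adj]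
    (u v : V) (huv : G.Adj u v) (w : V) :
    (w ∈ clNbhd G u ∩ clNbhd G v →
      nbhd (pivot G u v) w = nbhd G w ∆ clNbhd G u ∆ clNbhd G v) ∧
    (w ∈ clNbhd G u \ clNbhd G v →
      nbhd (pivot G u v) w = nbhd G w ∆ clNbhd G v) ∧
    (w ∈ clNbhd G v \ clNbhd G u →
      nbhd (pivot G u v) w = nbhd G w ∆ clNbhd G u) ∧
    (w ∉ clNbhd G u ∪ clNbhd G v →
      nbhd (pivot G u v) w = nbhd G w) := by
  refine ⟨?_, ?_, ?_, ?_⟩ <;> intro h <;> ext x <;>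
    simp only [mem_inter, mem_sdiff, mem_union, mem_symmDiff, mem_nbhd_iff', mem_clNbhd_iff',
      pivot_adj' G u v huv, Xor', Xor] at h ⊢ <;>
    generalize (w = u ∨ G.Adj u w) = a at * <;> generalize (w = v ∨ G.Adj v w) = b at * <;>
    generalize (x = u ∨ G.Adj u x) = c at * <;> generalize (x = v ∨ G.Adj v x) = d at * <;>
    generalize G.Adj w x = e at * <;>
    by_cases a <;> by_cases b <;> by_cases c <;> by_cases d <;> by_cases e <;> simp_all
end
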